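/- arXiv:2105.10766 — 2 statements merged into one kernel-verified Lean document; each statement's English description precedes it below -/
import Mathlib

section
/- Let g be a compactly driven system with the USP and let h : ←U → X_U be given by E(←u) = {h(←u)}. Define H : ←U → (X_U)^{ℤ<0} by H(←u) = (…, h(r²←u), h(r←u), h(←u)), i.e., the (−k)-th coordinate of H(←u) is h(r^{k−1}←u) for k ≥ 1. Then H is continuous (with the product topology on (X_U)^{ℤ<0}), each coordinate map π_{−k} ∘ H is surjective onto X_U, and for every v ∈ U, g̃_v ∘ H = H ∘ σ_v. -/
open Metric Set Filter Topology Function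

universe u' v'

variable {U : Type u'} {X : Type v'}

/-- `proc g u j m x = φ_ū(m+j, m, x)`: apply `g_{u m}, g_{u (m+1)}, …, g_{u (m+j-1)}`
to `x`, in that order. -/
def proc (g : U → X → X) (u : ℤ → U) : ℕ → ℤ → X → X
  | 0, _, x => x
  | j + 1, m, x => g (u (m + j)) (proc g u j m x)

/-- A solution of the driven system `g` for the input `u`. -/
def IsSolution (g : U → X → X) (u : ℤ → U) (x : ℤ → X) : Prop :=
  ∀ n : ℤ, x (n + 1) = g (u n) (x n)

/-- The unique solution property: every input has exactly one solution. -/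
def USP (g : U → X → X) : Prop :=
  ∀ u : ℤ → U, ∃! x : ℤ → X, IsSolution g u x

/-- The set of reachable states at time `n`: `X_n(ū) = ⋂_{j ≥ 1} φ_ū(n, n - j, X)`. -/
def reach (g : U → X → X) (u : ℤ → U) (n : ℤ) : Set X :=
  ⋂ j : ℕ, Set.range (proc g u (j + 1) (n - (j + 1)))

/-- The reachable set `X_U = ⋃ {X_n(ū) : n ∈ ℤ, ū ∈ U^ℤ}`. -/
def reachSet (g : U → X → X) : Set X :=
  ⋃ u : ℤ → U, ⋃ n : ℤ, reach g u n

/-- The left-infinite part `←u^n = (…, u_{n-2}, u_{n-1})` of an input `u`;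
coordinate `k : ℕ` corresponds to time `n - 1 - k` (so `0` is the most recent one). -/
def leftOf (u : ℤ → U) (n : ℤ) : ℕ → U := fun k => u (n - 1 - (k : ℤ))

/-- The right-shift map `r : (…, u_{-2}, u_{-1}) ↦ (…, u_{-3}, u_{-2})`. -/
def shift (w : ℕ → U) : ℕ → U := fun k => w (k + 1)

/-- The concatenation map `σ_v : (…, u_{-2}, u_{-1}) ↦ (…, u_{-2}, u_{-1}, v)`. -/
def append (v : U) (w : ℕ → U) : ℕ → U := fun k => Nat.casesOn k v w

/-- `encProc g w j = φ_ū(0, -j, ·)` for any input `ū` whose left-infinite part is `w`. -/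
def encProc (g : U → X → X) : (ℕ → U) → ℕ → X → X
  | _, 0, x => x
  | w, j + 1, x => g (w 0) (encProc g (shift w) j x)

/-- The encoding map `E(←u) = X_0(ū) = ⋂_{j ≥ 1} φ_ū(0, -j, X)`. -/
def enc (g : U → X → X) (w : ℕ → U) : Set X :=
  ⋂ j : ℕ, Set.range (encProc g w (j + 1))

/-- The map `g̃_v : (…, x_{-2}, x_{-1}) ↦ (…, x_{-2}, x_{-1}, g(v, x_{-1}))`. -/
def tildeg (g : U → X → X) (v : U) (x : ℕ → X) : ℕ → X :=
  fun k => Nat.casesOn k (g v (x 0)) x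

/-- The Hausdorff semi-distance `dist(A, B) = sup_{a ∈ A} inf_{b ∈ B} d(a, b)`. -/
noncomputable def semiDist [MetricSpace X] (A B : Set X) : ℝ :=
  sSup ((fun a => Metric.infDist a B) '' A)

/-!
The graph of the encoding map `E` is an intersection of closed sets, because every `φ_ū(0, -j, x)`
is jointly continuous in `(←u, x)` and `X` is compact Hausdorff. A closed graph into a compact space
makes `E` upper hemicontinuous, and an upper hemicontinuous map whose values are singletons `{h ←u}`
is a continuous `h`. The reachable sets at all times are values of `E`, so `X_U` is the range of
`h`; this range is not changed by precomposing with the surjection `r`. Finally `g_v` maps `E(←u)`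
into `E(σ_v ←u)`, so `g_v ∘ h = h ∘ σ_v`.
-/

section Hemicontinuity

variable {A Y Z : Type*} [TopologicalSpace A] [TopologicalSpace Y] [TopologicalSpace Z]
  [CompactSpace Y]

theorem upperHemicontinuous_of_isClosed_graph {F : A → Set Y}
    (hF : IsClosed {p : A × Y | p.2 ∈ F p.1}) : UpperHemicontinuous F := by
  rw [upperHemicontinuous_iff_isClosed_compl_preimage_Iic_compl]
  intro C hC
  have lowerInverse_eq :
      (F ⁻¹' Iic Cᶜ)ᶜ = Prod.fst '' ({p : A × Y | p.2 ∈ F p.1} ∩ Prod.snd ⁻¹' C) := by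
    ext a
    simp [Set.not_subset]
  rw [lowerInverse_eq]
  exact isClosedMap_fst_of_compactSpace _ (hF.inter (hC.preimage continuous_snd))

theorem isClosed_setOf_mem_range [T2Space Z] {f : A → Y → Z}
    (hf : Continuous fun p : A × Y => f p.1 p.2) :
    IsClosed {p : A × Z | p.2 ∈ range (f p.1)} := by
  have eq_image_fst : {p : A × Z | p.2 ∈ range (f p.1)} =
      Prod.fst '' {q : (A × Z) × Y | f q.1.1 q.2 = q.1.2} := by
    ext p
    simp
  rw [eq_image_fst]
  exact isClosedMap_fst_of_compactSpace _ (isClosed_eq (by fun_prop) (by fun_prop))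

end Hemicontinuity

theorem leftInverse_shift_append (v : U) : LeftInverse shift (append v) :=
  fun _ => rfl

theorem shift_surjective : Surjective (shift : (ℕ → U) → ℕ → U) :=
  fun w => ⟨append (w 0) w, leftInverse_shift_append (w 0) w⟩

theorem continuous_shift [TopologicalSpace U] : Continuous (shift : (ℕ → U) → ℕ → U) :=
  continuous_pi fun k => continuous_apply (k + 1)

theorem shift_leftOf (u : ℤ → U) (n : ℤ) : shift (leftOf u n) = leftOf u (n - 1) := by
  funext k
  simp only [shift, leftOf]
  congr 1
  lia

theorem leftOf_surjective (n : ℤ) : Surjective fun u : ℤ → U => leftOf u n := by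
  intro w
  refine ⟨fun m => w (n - 1 - m).toNat, ?_⟩
  funext k
  simp [leftOf]

theorem proc_eq_encProc_leftOf (g : U → X → X) (u : ℤ → U) (j : ℕ) (m : ℤ) :
    proc g u j m = encProc g (leftOf u (m + j)) j := by
  induction j with
  | zero => rfl
  | succ j ih =>
    have last_input : leftOf u (m + (j + 1 : ℕ)) 0 = u (m + j) := by
      simp only [leftOf]
      congr 1
      lia
    have earlier_inputs : shift (leftOf u (m + (j + 1 : ℕ))) = leftOf u (m + j) := by
      rw [shift_leftOf]
      congr 1
      lia
    funext x
    simp only [proc, encProc, last_input, earlier_inputs, ih]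

theorem reach_eq_enc_leftOf (g : U → X → X) (u : ℤ → U) (n : ℤ) :
    reach g u n = enc g (leftOf u n) := by
  simp only [reach, enc, proc_eq_encProc_leftOf, Nat.cast_add_one, sub_add_cancel]

theorem reachSet_eq_iUnion_enc (g : U → X → X) : reachSet g = ⋃ w : ℕ → U, enc g w := by
  simp only [reachSet, reach_eq_enc_leftOf]
  rw [iUnion_comm]
  simp only [(leftOf_surjective _).iUnion_comp (enc g), iUnion_const]

theorem tildeg_zero (g : U → X → X) (v : U) (x : ℕ → X) : tildeg g v x 0 = g v (x 0) :=
  rfl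

theorem tildeg_succ (g : U → X → X) (v : U) (x : ℕ → X) (k : ℕ) :
    tildeg g v x (k + 1) = x k :=
  rfl

theorem mapsTo_enc_append (g : U → X → X) (v : U) (w : ℕ → U) :
    MapsTo (g v) (enc g w) (enc g (append v w)) := by
  intro x hx
  refine mem_iInter.2 fun j => ?_
  cases j with
  | zero => exact ⟨x, rfl⟩
  | succ j =>
    obtain ⟨y, hy⟩ := mem_iInter.1 hx j
    exact ⟨y, congrArg (g v) hy⟩

section Continuity

variable [TopologicalSpace U] [TopologicalSpace X] {g : U → X → X}

theorem continuous_encProc (hg : Continuous fun p : U × X => g p.1 p.2) (j : ℕ) :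
    Continuous fun p : (ℕ → U) × X => encProc g p.1 j p.2 := by
  induction j with
  | zero => exact continuous_snd
  | succ j ih =>
    have earlier_state : Continuous fun p : (ℕ → U) × X => encProc g (shift p.1) j p.2 :=
      ih.comp (continuous_shift.prodMap continuous_id)
    have last_input : Continuous fun p : (ℕ → U) × X => p.1 0 := by fun_prop
    exact hg.comp (last_input.prodMk earlier_state)

theorem upperHemicontinuous_enc [CompactSpace X] [T2Space X]
    (hg : Continuous fun p : U × X => g p.1 p.2) : UpperHemicontinuous (enc g) := by
  apply upperHemicontinuous_of_isClosed_graph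
  simp only [enc, mem_iInter, ofPred_forall]
  exact isClosed_iInter fun j =>
    isClosed_setOf_mem_range (f := fun w x => encProc g w (j + 1) x) (continuous_encProc hg (j + 1))

end Continuity

section SingletonEncoding

variable {g : U → X → X} {h : (ℕ → U) → X}

theorem continuous_of_enc_eq_singleton [TopologicalSpace U] [TopologicalSpace X] [CompactSpace X]
    [T2Space X] (hg : Continuous fun p : U × X => g p.1 p.2) (hh : ∀ w, enc g w = {h w}) :
    Continuous h := by
  have enc_eq : enc g = fun w => {h w} := funext hh
  exact upperHemicontinuous_singleton_iff.1 (enc_eq ▸ upperHemicontinuous_enc hg)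

theorem range_eq_reachSet_of_enc_eq_singleton (hh : ∀ w, enc g w = {h w}) :
    range h = reachSet g := by
  simp only [reachSet_eq_iUnion_enc, hh, iUnion_singleton_eq_range]

theorem apply_append_of_enc_eq_singleton (hh : ∀ w, enc g w = {h w}) (v : U) (w : ℕ → U) :
    h (append v w) = g v (h w) := by
  have hmem : g v (h w) ∈ enc g (append v w) :=
    mapsTo_enc_append g v w (hh w ▸ mem_singleton (h w))
  rw [hh, mem_singleton_iff] at hmem
  exact hmem.symm

end SingletonEncoding

theorem stmt_11_general [TopologicalSpace U] [TopologicalSpace X] [CompactSpace X] [T2Space X]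
    (g : U → X → X) (hg : Continuous fun p : U × X => g p.1 p.2)
    (h : (ℕ → U) → X) (hh : ∀ w : ℕ → U, enc g w = {h w})
    (H : (ℕ → U) → ℕ → X) (hH : ∀ (w : ℕ → U) (k : ℕ), H w k = h (shift^[k] w)) :
    Continuous H ∧
      (∀ k : ℕ, Set.range (fun w => H w k) = reachSet g) ∧
      ∀ v : U, tildeg g v ∘ H = H ∘ append v := by
  have coord_eq (k : ℕ) : (fun w => H w k) = h ∘ shift^[k] := funext fun w => hH w k
  refine ⟨continuous_pi fun k => ?_, fun k => ?_, fun v => ?_⟩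
  · rw [coord_eq]
    exact (continuous_of_enc_eq_singleton hg hh).comp (continuous_shift.iterate k)
  · rw [coord_eq, (shift_surjective.iterate k).range_comp]
    exact range_eq_reachSet_of_enc_eq_singleton hh
  · funext w k
    cases k with
    | zero =>
      simp only [comp_apply, tildeg_zero, hH, iterate_zero_apply,
        apply_append_of_enc_eq_singleton hh]
    | succ k =>
      simp only [comp_apply, tildeg_succ, hH, iterate_succ_apply, leftInverse_shift_append v w]

/-- under the USP, the map `H(←u) = (…, h(r²←u), h(r←u), h(←u))` is
continuous, each coordinate map is surjective onto `X_U`, and `g̃_v ∘ H = H ∘ σ_v`. -/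
theorem stmt_11 [MetricSpace X] [CompactSpace X] [MetricSpace U] [CompactSpace U]
    (g : U → X → X) (hg : Continuous fun p : U × X => g p.1 p.2)
    (husp : USP g) (h : (ℕ → U) → X) (hh : ∀ w : ℕ → U, enc g w = {h w})
    (H : (ℕ → U) → ℕ → X) (hH : ∀ (w : ℕ → U) (k : ℕ), H w k = h (shift^[k] w)) :
    Continuous H ∧
      (∀ k : ℕ, Set.range (fun w => H w k) = reachSet g) ∧
      ∀ v : U, tildeg g v ∘ H = H ∘ append v :=
  stmt_11_general g hg h hh H hH
end

section
/- Let g be a compactly driven system. Suppose H : ←U → (X_U)^{ℤ<0} is continuous (product topologies), its first coordinate map θ_1 = π_{−1} ∘ H is surjective onto X_U, and g̃_v ∘ H = H ∘ σ_v for every v ∈ U. Then g has the USP; moreover, writing E(←u) = {h(←u)}, the coordinates of H satisfy π_{−k} ∘ H = h ∘ r^{k−1} for every k ≥ 1, so that H(←u) = (…, h(r←u), h(←u)). -/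
open Metric Set Filter Topology Function

universe u' v'

variable {U : Type u'} {X : Type v'}

/-!
Write `θ` for the first coordinate map of `H`; it intertwines `append v` with `g v`. Compactness
lets a point of `enc g w` be pulled back `n` steps along `w` to a point that is again reachable,
hence of the form `θ z`. Going forward again, the original point is `θ` of a sequence agreeing with
`w` in the `n` most recent entries. As `n → ∞`, continuity of `θ` forces that point to be `θ w`.
-/

section Topology

theorem image_iInter_of_antitone_of_isCompact {α β : Type*} [TopologicalSpace α]
    [TopologicalSpace β] [T1Space β] {f : α → β} (hf : Continuous f) {s : ℕ → Set α}
    (hanti : Antitone s) (hclosed : ∀ n, IsClosed (s n)) (hcompact : IsCompact (s 0)) :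
    f '' ⋂ n, s n = ⋂ n, f '' s n := by
  refine (image_iInter_subset s f).antisymm fun y hy => ?_
  have hfibre : IsClosed (f ⁻¹' {y}) := isClosed_singleton.preimage hf
  -- The fibre meets the sets `s n` in a decreasing sequence of nonempty compact sets.
  obtain ⟨x, hx⟩ : (⋂ n, s n ∩ f ⁻¹' {y}).Nonempty :=
    IsCompact.nonempty_iInter_of_sequence_nonempty_isCompact_isClosed _
      (fun n => inter_subset_inter_left _ (hanti n.le_succ)) (mem_iInter.1 hy)
      (hcompact.inter_right hfibre) fun n => (hclosed n).inter hfibre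
  rw [← iInter_inter] at hx
  exact ⟨x, hx.1, hx.2⟩

theorem iInter_image_cylinder {E : ℕ → Type*} [∀ n, TopologicalSpace (E n)] {β : Type*}
    [TopologicalSpace β] [T1Space β] {f : (∀ n, E n) → β} {x : ∀ n, E n} (hf : ContinuousAt f x) :
    ⋂ n, f '' PiNat.cylinder x n = {f x} := by
  refine Subset.antisymm (fun y hy => ?_) <| singleton_subset_iff.2 <| mem_iInter.2 fun n =>
    mem_image_of_mem f (PiNat.self_mem_cylinder x n)
  choose z hz hzy using mem_iInter.1 hy
  have hlim : Tendsto z atTop (𝓝 x) := tendsto_pi_nhds.2 fun k =>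
    tendsto_const_nhds.congr' <| (eventually_gt_atTop k).mono fun n hn => (hz n k hn).symm
  have hlim_y : Tendsto (fun _ : ℕ => y) atTop (𝓝 (f x)) :=
    (hf.tendsto.comp hlim).congr hzy
  exact tendsto_const_nhds_iff.1 hlim_y

end Topology

section LeftInfiniteSequences

theorem append_zero_shift (w : ℕ → U) : append (w 0) (shift w) = w := by
  funext k
  cases k <;> rfl

theorem append_mem_cylinder_succ {w z : ℕ → U} {n : ℕ} (hz : z ∈ PiNat.cylinder (shift w) n) :
    append (w 0) z ∈ PiNat.cylinder w (n + 1)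
  | 0, _ => rfl
  | k + 1, hk => hz k (Nat.lt_of_succ_lt_succ hk)

theorem append_leftOf (u : ℤ → U) (n : ℤ) : append (u n) (leftOf u n) = leftOf u (n + 1) := by
  simpa [leftOf, shift_leftOf] using append_zero_shift (leftOf u (n + 1))

theorem surjective_leftOf_zero : Surjective fun u : ℤ → U => leftOf u 0 := fun w =>
  ⟨fun n => w (-1 - n).toNat, funext fun k => congrArg w (by lia)⟩

end LeftInfiniteSequences

section Encoding

variable (g : U → X → X)

theorem proc_sub_eq_encProc (u : ℤ → U) (j : ℕ) (n : ℤ) :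
    proc g u j (n - j) = encProc g (leftOf u n) j := by
  induction j generalizing n with
  | zero => rfl
  | succ j ih =>
    funext x
    have hstart : n - ((j + 1 : ℕ) : ℤ) = n - 1 - j := by push_cast; ring
    rw [proc, encProc, shift_leftOf, hstart, ih, sub_add_cancel]
    simp only [leftOf, Nat.cast_zero, sub_zero]

theorem enc_leftOf (u : ℤ → U) (n : ℤ) : enc g (leftOf u n) = reach g u n := by
  simp only [enc, reach, ← proc_sub_eq_encProc, Nat.cast_succ]

theorem enc_subset_reachSet (w : ℕ → U) : enc g w ⊆ reachSet g := by
  obtain ⟨u, rfl⟩ := surjective_leftOf_zero w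
  exact (enc_leftOf g u 0).trans_subset (subset_iUnion₂_of_subset u 0 Subset.rfl)

theorem encProc_succ (w : ℕ → U) (j : ℕ) (x : X) :
    encProc g w (j + 1) x = encProc g w j (g (w j) x) := by
  induction j generalizing w with
  | zero => rfl
  | succ j ih => exact congrArg (g (w 0)) (ih (shift w))

theorem antitone_range_encProc (w : ℕ → U) : Antitone fun j => range (encProc g w j) :=
  antitone_nat_of_succ_le fun j => range_subset_iff.2 fun x =>
    ⟨g (w j) x, (encProc_succ g w j x).symm⟩

variable {g}

theorem continuous_encProc_s12 [TopologicalSpace X] (hg : ∀ v, Continuous (g v)) (w : ℕ → U) (j : ℕ) :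
    Continuous (encProc g w j) := by
  induction j generalizing w with
  | zero => exact continuous_id
  | succ j ih => exact (hg (w 0)).comp (ih (shift w))

theorem enc_eq_image_enc_shift [TopologicalSpace X] [CompactSpace X] [T2Space X]
    (hg : ∀ v, Continuous (g v)) (w : ℕ → U) : enc g w = g (w 0) '' enc g (shift w) := by
  have hcompact : ∀ j, IsCompact (range (encProc g (shift w) j)) := fun j =>
    isCompact_range (continuous_encProc_s12 hg (shift w) j)
  calc enc g w = ⋂ j, g (w 0) '' range (encProc g (shift w) j) :=
        iInter_congr fun j => range_comp (g (w 0)) (encProc g (shift w) j)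
    _ = g (w 0) '' ⋂ j, range (encProc g (shift w) j) :=
        (image_iInter_of_antitone_of_isCompact (hg (w 0)) (antitone_range_encProc g (shift w))
          (fun j => (hcompact j).isClosed) (hcompact 0)).symm
    _ = g (w 0) '' enc g (shift w) :=
        congrArg (g (w 0) '' ·) ((antitone_range_encProc g (shift w)).iInf_nat_add 1).symm

end Encoding

section Solutions

variable {g : U → X → X} {u : ℤ → U} {x : ℤ → X}

theorem IsSolution.proc_apply (hx : IsSolution g u x) (j : ℕ) (m : ℤ) :
    proc g u j m (x m) = x (m + j) := by
  induction j with
  | zero => simp [proc]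
  | succ j ih => rw [proc, ih, ← hx, Nat.cast_succ, add_assoc]

theorem IsSolution.mem_reach (hx : IsSolution g u x) (n : ℤ) : x n ∈ reach g u n :=
  mem_iInter.2 fun j => ⟨x (n - (j + 1)), by simp [hx.proc_apply]⟩

end Solutions

section Semiconjugacy

variable {g : U → X → X} {θ : (ℕ → U) → X} {H : (ℕ → U) → ℕ → X}

theorem isSolution_of_semiconj (hθ : ∀ v, Semiconj θ (append v) (g v)) (u : ℤ → U) :
    IsSolution g u fun n => θ (leftOf u n) := fun n =>
  (congrArg θ (append_leftOf u n)).symm.trans (hθ (u n) (leftOf u n))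

theorem usp_of_enc_subset_singleton (hθ : ∀ v, Semiconj θ (append v) (g v))
    (henc : ∀ w, enc g w ⊆ {θ w}) : USP g := fun u =>
  ⟨fun n => θ (leftOf u n), isSolution_of_semiconj hθ u, fun _ hx => funext fun n =>
    henc (leftOf u n) ((enc_leftOf g u n).ge (hx.mem_reach n))⟩

theorem encProc_apply_of_semiconj (hθ : ∀ v, Semiconj θ (append v) (g v)) (w : ℕ → U) (j : ℕ) :
    encProc g w j (θ (shift^[j] w)) = θ w := by
  induction j generalizing w with
  | zero => rfl
  | succ j ih => rw [encProc, iterate_succ_apply, ih, ← hθ, append_zero_shift]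

theorem mem_enc_of_semiconj (hθ : ∀ v, Semiconj θ (append v) (g v)) (w : ℕ → U) : θ w ∈ enc g w :=
  mem_iInter.2 fun j => ⟨_, encProc_apply_of_semiconj hθ w (j + 1)⟩

theorem enc_subset_image_cylinder [TopologicalSpace X] [CompactSpace X] [T2Space X]
    (hg : ∀ v, Continuous (g v)) (hθ : ∀ v, Semiconj θ (append v) (g v))
    (hreach : reachSet g ⊆ range θ) (w : ℕ → U) (n : ℕ) :
    enc g w ⊆ θ '' PiNat.cylinder w n := by
  induction n generalizing w with
  | zero =>
    rw [PiNat.cylinder_zero, image_univ]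
    exact (enc_subset_reachSet g w).trans hreach
  | succ n ih =>
    rw [enc_eq_image_enc_shift hg w]
    rintro _ ⟨y, hy, rfl⟩
    obtain ⟨z, hz, rfl⟩ := ih (shift w) hy
    exact ⟨append (w 0) z, append_mem_cylinder_succ hz, hθ (w 0) z⟩

theorem enc_eq_singleton [TopologicalSpace U] [TopologicalSpace X] [CompactSpace X] [T2Space X]
    (hg : ∀ v, Continuous (g v)) (hcont : Continuous θ) (hreach : reachSet g ⊆ range θ)
    (hθ : ∀ v, Semiconj θ (append v) (g v)) (w : ℕ → U) : enc g w = {θ w} := by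
  refine Subset.antisymm ?_ (singleton_subset_iff.2 (mem_enc_of_semiconj hθ w))
  rw [← iInter_image_cylinder hcont.continuousAt]
  exact subset_iInter (enc_subset_image_cylinder hg hθ hreach w)

theorem semiconj_eval_zero (hH : ∀ v, Semiconj H (append v) (tildeg g v)) (v : U) :
    Semiconj (fun w => H w 0) (append v) (g v) := fun w =>
  congrFun (hH v w) 0

theorem apply_eq_apply_iterate_shift_zero (hH : ∀ v, Semiconj H (append v) (tildeg g v))
    (w : ℕ → U) (k : ℕ) : H w k = H (shift^[k] w) 0 := by
  induction k generalizing w with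
  | zero => rfl
  | succ k ih =>
    calc H w (k + 1) = H (append (w 0) (shift w)) (k + 1) := by rw [append_zero_shift]
      _ = H (shift w) k := congrFun (hH (w 0) (shift w)) (k + 1)
      _ = H (shift^[k + 1] w) 0 := ih (shift w)

end Semiconjugacy

theorem stmt_12_general [TopologicalSpace X] [CompactSpace X] [T2Space X] [TopologicalSpace U]
    (g : U → X → X) (hg : ∀ v, Continuous (g v)) (H : (ℕ → U) → ℕ → X)
    (hcont : Continuous fun w => H w 0) (hreach : reachSet g ⊆ range fun w => H w 0)
    (hH : ∀ v, Semiconj H (append v) (tildeg g v)) :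
    USP g ∧
      ∃ h : (ℕ → U) → X, (∀ w : ℕ → U, enc g w = {h w}) ∧
        ∀ (w : ℕ → U) (k : ℕ), H w k = h (shift^[k] w) :=
  have hθ := semiconj_eval_zero hH
  have henc := enc_eq_singleton hg hcont hreach hθ
  ⟨usp_of_enc_subset_singleton hθ fun w => (henc w).subset,
    fun w => H w 0, henc, apply_eq_apply_iterate_shift_zero hH⟩

/-- if `H : ←U → (X_U)^{ℤ<0}` is continuous, its first coordinate map is
surjective onto `X_U`, and `g̃_v ∘ H = H ∘ σ_v` for every `v`, then `g` has the USP and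
the coordinates of `H` satisfy `π_{-k} ∘ H = h ∘ r^{k-1}` where `E(←u) = {h(←u)}`. -/
theorem stmt_12 [MetricSpace X] [CompactSpace X] [MetricSpace U] [CompactSpace U]
    (g : U → X → X) (hg : Continuous fun p : U × X => g p.1 p.2)
    (H : (ℕ → U) → ℕ → X) (hcont : Continuous H)
    (hrange : ∀ (w : ℕ → U) (k : ℕ), H w k ∈ reachSet g)
    (hsurj : Set.range (fun w => H w 0) = reachSet g)
    (hcomm : ∀ v : U, tildeg g v ∘ H = H ∘ append v) :
    USP g ∧
      ∃ h : (ℕ → U) → X, (∀ w : ℕ → U, enc g w = {h w}) ∧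
        ∀ (w : ℕ → U) (k : ℕ), H w k = h (shift^[k] w) :=
  stmt_12_general g (fun v => hg.comp (.prodMk_right v)) H ((continuous_apply 0).comp hcont)
    hsurj.ge fun v => semiconj_iff_comp_eq.2 (hcomm v).symm
end
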